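/- Let τ be a positive real number and x a complex number. Then Φ(x, τ) = −(e^{iπ(1/4 − x²/τ)}/√τ)·conj( Φ( −conj(x)/τ , 1/τ ) ), where conj denotes complex conjugation and √τ is the positive real square root. -/

import Mathlib

open scoped Real
open MeasureTheory Set Complex

/-- Integral along the straight line `t ↦ c + e^{iθ} t`, `t ∈ ℝ`. -/
noncomputable def lineInt (c θ : ℝ) (f : ℂ → ℂ) : ℂ :=
  ∫ t : ℝ, f ((c : ℂ) + Complex.exp ((θ : ℂ) * Complex.I) * (t : ℂ)) *
    Complex.exp ((θ : ℂ) * Complex.I)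

/-- The Mordell integral `Φ(x, τ)`, the path being the straight line of slope 1
crossing the real axis at `c ∈ (0, 1)`. -/
noncomputable def mordellPhi (x τ : ℂ) (c : ℝ) : ℂ :=
  lineInt c (π/4) (fun u =>
    Complex.exp ((π : ℂ) * Complex.I * τ * u ^ 2 + 2 * (π : ℂ) * Complex.I * x * u) /
      (Complex.exp (2 * (π : ℂ) * Complex.I * u) - 1))

/-!
The function `e^{πiτu² + 2πixu}` is, up to a constant, the Fourier transform of the
Gaussian `e^{-πi(v-x)²/τ}` along a line of slope `-1` through `c₂`. Inserting this representation in
`Φ(x, τ)` and exchanging the integrals leaves the inner integral `J(v)` of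
`e^{2πiuv} / (e^{2πiu} - 1)` over the line of slope `1` through `c₁`. Moving that line one unit to
the left multiplies the integral by `e^{-2πiv}` and crosses the pole `u = 0` of residue `1/(2πi)`,
so that `(1 - e^{-2πiv}) J(v) = 1`. What remains is an integral over a line of slope `-1`, which
complex conjugation turns into the Mordell integral at `-conj x / conj τ` and `1 / conj τ`.
-/

open Filter Topology Asymptotics
open scoped Interval

section Contour

variable {E : Type*} [NormedAddCommGroup E] [NormedSpace ℂ E] {a b : ℝ}

theorem integral_inv_add_mul_I {y : ℝ} (hy : y ≠ 0) (R : ℝ) :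
    ∫ x in -R..R, ((x : ℂ) + y * I)⁻¹ = -(2 * Real.arctan (R / y) : ℝ) * I := by
  have hsq (x : ℝ) : x ^ 2 + y ^ 2 ≠ 0 := by positivity
  have hne (x : ℝ) : (x : ℂ) + y * I ≠ 0 := fun h => hy (by simpa using congrArg im h)
  have hderiv (x : ℝ) : HasDerivAt
      (fun x : ℝ => ((Real.log (x ^ 2 + y ^ 2) / 2 : ℝ) : ℂ) - (Real.arctan (x / y) : ℝ) * I)
      ((x : ℂ) + y * I)⁻¹ x := by
    have hlog := ((((hasDerivAt_id' x).pow 2).add_const (y ^ 2)).log (hsq x)).div_const 2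
    have harctan := ((hasDerivAt_id' x).div_const y).arctan
    refine (hlog.ofReal_comp.sub (harctan.ofReal_comp.mul_const I)).congr_deriv ?_
    have hre : (2 : ℕ) * x ^ (2 - 1) * 1 / (x ^ 2 + y ^ 2) / 2 = x / (x ^ 2 + y ^ 2) := by
      push_cast
      ring
    have him : 1 / (1 + (x / y) ^ 2) * (1 / y) = y / (x ^ 2 + y ^ 2) := by
      have : 1 + (x / y) ^ 2 = (x ^ 2 + y ^ 2) / y ^ 2 := by field_simp; ring
      rw [this]; field_simp
    simp only [Pi.pow_apply, hre, him]
    apply Complex.ext <;> simp [-ofReal_div, inv_re, inv_im, normSq_apply, sq, neg_div]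
  have hcont : Continuous fun x : ℝ => ((x : ℂ) + y * I)⁻¹ := by fun_prop (disch := exact hne)
  rw [intervalIntegral.integral_eq_sub_of_hasDerivAt (fun x _ => hderiv x)
    (hcont.intervalIntegrable _ _), neg_sq, neg_div, Real.arctan_neg]
  push_cast
  ring

theorem tendsto_integral_inv_add_mul_I_of_pos {y : ℝ} (hy : 0 < y) :
    Tendsto (fun R : ℝ => ∫ x in -R..R, ((x : ℂ) + y * I)⁻¹) atTop (𝓝 (-(π * I))) := by
  have harctan : Tendsto (fun R : ℝ => Real.arctan (R / y)) atTop (𝓝 (π / 2)) :=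
    (Real.tendsto_arctan_atTop.mono_right nhdsWithin_le_nhds).comp (tendsto_id.atTop_div_const hy)
  simp_rw [integral_inv_add_mul_I hy.ne', ← neg_mul]
  rw [show (π : ℂ) = (2 * (π / 2) : ℝ) by push_cast; ring]
  exact (((harctan.const_mul 2).ofReal).neg).mul_const I

theorem tendsto_integral_inv_add_mul_I_of_neg {y : ℝ} (hy : y < 0) :
    Tendsto (fun R : ℝ => ∫ x in -R..R, ((x : ℂ) + y * I)⁻¹) atTop (𝓝 (π * I)) := by
  have h := (tendsto_integral_inv_add_mul_I_of_pos (neg_pos.2 hy)).neg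
  simp_rw [integral_inv_add_mul_I hy.ne, integral_inv_add_mul_I (neg_pos.2 hy).ne'] at h ⊢
  simpa [div_neg] using h

theorem tendsto_integral_vertical_of_tendsto_cocompact {f : ℂ → E} {u : ℝ → ℝ}
    (hf : ContinuousOn f (im ⁻¹' [[a, b]]))
    (hdecay : Tendsto f (cocompact ℂ ⊓ 𝓟 (im ⁻¹' [[a, b]])) (𝓝 0))
    (hu : Tendsto u atTop (cocompact ℝ)) :
    Tendsto (fun R => ∫ y in a..b, f (u R + y * I)) atTop (𝓝 0) := by
  have him (x y : ℝ) : (x + y * I : ℂ).im = y := by simp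
  have hcont (R : ℝ) : ContinuousOn (fun y : ℝ => f (u R + y * I)) [[a, b]] :=
    hf.comp (by fun_prop) fun y hy => by rwa [mem_preimage, him]
  have hescape : Tendsto (fun p : ℝ × ℝ => (u p.1 + p.2 * I : ℂ)) (atTop ×ˢ 𝓟 [[a, b]])
      (cocompact ℂ ⊓ 𝓟 (im ⁻¹' [[a, b]])) := by
    refine tendsto_inf.2 ⟨?_, tendsto_principal.2 ?_⟩
    · rw [← Metric.cobounded_eq_cocompact, ← tendsto_norm_atTop_iff_cobounded] at hu ⊢
      exact tendsto_atTop_mono (fun p => by simpa using abs_re_le_norm (u p.1 + p.2 * I))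
        (hu.comp tendsto_fst)
    · filter_upwards [tendsto_snd.eventually (eventually_mem_set.2 (mem_principal_self _))]
        with p hp
      rwa [mem_preimage, him]
  have hunif : TendstoUniformlyOn (fun R y : ℝ => f (u R + y * I)) 0 atTop [[a, b]] :=
    tendstoUniformlyOn_iff_tendsto.2 (Uniform.tendsto_nhds_right.1 (hdecay.comp hescape))
  simpa using hunif.tendsto_intervalIntegral_of_continuousOn (μ := volume) (.of_forall hcont)

theorem tendsto_integral_sub_integral_of_differentiableOn {f : ℂ → E}
    (hf : DifferentiableOn ℂ f (im ⁻¹' [[a, b]]))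
    (hdecay : Tendsto f (cocompact ℂ ⊓ 𝓟 (im ⁻¹' [[a, b]])) (𝓝 0)) :
    Tendsto (fun R : ℝ => (∫ x in -R..R, f (x + a * I)) - ∫ x in -R..R, f (x + b * I))
      atTop (𝓝 0) := by
  have hside {u : ℝ → ℝ} (hu : Tendsto u atTop (cocompact ℝ)) :
      Tendsto (fun R => I • ∫ y in a..b, f (u R + y * I)) atTop (𝓝 0) := by
    simpa using
      (tendsto_integral_vertical_of_tendsto_cocompact hf.continuousOn hdecay hu).const_smul I
  have hsides := (hside (tendsto_neg_atTop_atBot.mono_right atBot_le_cocompact)).sub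
    (hside (tendsto_id.mono_right atTop_le_cocompact))
  rw [sub_zero] at hsides
  refine hsides.congr fun R => ?_
  have hrect := integral_boundary_rect_eq_zero_of_differentiableOn f ⟨-R, a⟩ ⟨R, b⟩
    (hf.mono fun w hw => hw.2)
  exact sub_eq_of_eq_add (sub_eq_zero.1 hrect).symm

theorem exists_differentiableOn_eq_sub_div {f : ℂ → ℂ} {S : Set ℂ} {p r : ℂ} (hS : S ∈ 𝓝 p)
    (hf : DifferentiableOn ℂ f (S \ {p}))
    (hr : Tendsto (fun w => (w - p) * f w) (𝓝[≠] p) (𝓝 r)) :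
    ∃ g : ℂ → ℂ, DifferentiableOn ℂ g S ∧ ∀ w ≠ p, g w = f w - r / (w - p) := by
  set h : ℂ → ℂ := fun w => f w - r / (w - p)
  have hh : DifferentiableOn ℂ h (S \ {p}) := hf.sub <| (differentiableOn_const r).div
    (differentiableOn_id.sub_const p) fun w hw => sub_ne_zero.2 hw.2
  have hlim : Tendsto (fun w => (w - p) * (h w - h p)) (𝓝[≠] p) (𝓝 0) := by
    have hsub : Tendsto (fun w : ℂ => w - p) (𝓝[≠] p) (𝓝 0) := by
      simpa using ((continuous_sub_right p).tendsto p).mono_left nhdsWithin_le_nhds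
    have hexpand := (hr.sub_const r).sub (hsub.mul_const (h p))
    rw [sub_self, zero_mul, sub_zero] at hexpand
    refine hexpand.congr' ?_
    filter_upwards [self_mem_nhdsWithin] with w hw
    have : w - p ≠ 0 := sub_ne_zero.2 hw
    simp only [h]
    field_simp
  refine ⟨_, differentiableOn_update_limUnder_of_isLittleO hS hh ?_,
    fun w hw => Function.update_of_ne hw _ _⟩
  refine isLittleO_of_tendsto' ?_ (by simpa [div_eq_mul_inv, mul_comm] using hlim)
  filter_upwards [self_mem_nhdsWithin] with w hw h0
  exact absurd h0 (inv_ne_zero (sub_ne_zero.2 hw))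

theorem integral_sub_integral_of_simple_pole {f : ℂ → ℂ} {r : ℂ} (ha : a < 0) (hb : 0 < b)
    (hf : DifferentiableOn ℂ f (im ⁻¹' Icc a b \ {0}))
    (hr : Tendsto (fun w => w * f w) (𝓝[≠] 0) (𝓝 r))
    (hfa : Integrable fun x : ℝ => f (x + a * I)) (hfb : Integrable fun x : ℝ => f (x + b * I))
    (hdecay : Tendsto f (cocompact ℂ ⊓ 𝓟 (im ⁻¹' Icc a b)) (𝓝 0)) :
    (∫ x : ℝ, f (x + a * I)) - ∫ x : ℝ, f (x + b * I) = 2 * π * I * r := by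
  obtain ⟨g, hg, hgf⟩ := exists_differentiableOn_eq_sub_div
    (continuous_im.continuousAt (Icc_mem_nhds ha hb)) hf (by simpa using hr)
  simp only [sub_zero, div_eq_mul_inv] at hgf
  rw [← uIcc_of_le (ha.trans hb).le] at hg hdecay
  have hne {y : ℝ} (hy : y ≠ 0) (x : ℝ) : (x : ℂ) + y * I ≠ 0 :=
    fun h => hy (by simpa using congrArg im h)
  have hgdecay : Tendsto g (cocompact ℂ ⊓ 𝓟 (im ⁻¹' [[a, b]])) (𝓝 0) := by
    have hinv : Tendsto (fun w : ℂ => r * w⁻¹) (cocompact ℂ) (𝓝 0) := by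
      simpa [Metric.cobounded_eq_cocompact] using (tendsto_inv₀_cobounded (α := ℂ)).const_mul r
    have hsub := hdecay.sub (hinv.mono_left inf_le_left)
    rw [sub_zero] at hsub
    refine hsub.congr' (EventuallyEq.filter_mono ?_ inf_le_left)
    filter_upwards [isCompact_singleton.compl_mem_cocompact] with w hw
    exact (hgf w hw).symm
  have hline {y : ℝ} (hy : y ≠ 0) (hfy : Integrable fun x : ℝ => f (x + y * I)) {l : ℂ}
      (hl : Tendsto (fun R : ℝ => ∫ x in -R..R, ((x : ℂ) + y * I)⁻¹) atTop (𝓝 l)) :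
      Tendsto (fun R : ℝ => ∫ x in -R..R, g (x + y * I)) atTop
        (𝓝 ((∫ x : ℝ, f (x + y * I)) - r * l)) := by
    have hfR := intervalIntegral_tendsto_integral hfy tendsto_neg_atTop_atBot tendsto_id
    refine (hfR.sub (hl.const_mul r)).congr fun R => ?_
    have hinv : Continuous fun x : ℝ => ((x : ℂ) + y * I)⁻¹ := by
      fun_prop (disch := exact hne hy)
    simp_rw [hgf _ (hne hy _)]
    rw [intervalIntegral.integral_sub hfy.intervalIntegrable
      ((hinv.const_mul r).intervalIntegrable _ _), intervalIntegral.integral_const_mul]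
    rfl
  have hlim := (hline ha.ne hfa (tendsto_integral_inv_add_mul_I_of_neg ha)).sub
    (hline hb.ne' hfb (tendsto_integral_inv_add_mul_I_of_pos hb))
  have hzero := tendsto_integral_sub_integral_of_differentiableOn hg hgdecay
  linear_combination tendsto_nhds_unique hlim hzero

end Contour

section Line

variable {c c₁ c₂ θ : ℝ} {f g : ℂ → ℂ}

/-- The point with parameter `t` on the line through `c` in direction `e^{iθ}`, the path along which
`lineInt c θ` integrates. -/
noncomputable def linePoint (c θ t : ℝ) : ℂ := c + cexp (θ * I) * t

@[fun_prop]
theorem continuous_linePoint (c θ : ℝ) : Continuous (linePoint c θ) := by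
  unfold linePoint
  fun_prop

theorem linePoint_im (c θ t : ℝ) : (linePoint c θ t).im = t * Real.sin θ := by
  rw [linePoint, add_im, ofReal_im, zero_add, im_mul_ofReal, exp_ofReal_mul_I_im, mul_comm]

theorem linePoint_sub_one (c θ t : ℝ) : linePoint (c - 1) θ t = linePoint c θ t - 1 := by
  simp only [linePoint]
  push_cast
  ring

theorem exp_mul_linePoint_neg (c θ t : ℝ) :
    cexp (θ * I) * linePoint c (-θ) t = linePoint t θ c := by
  rw [linePoint, linePoint, mul_add, ← mul_assoc, ← Complex.exp_add]
  simp [add_comm]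

theorem conj_linePoint (c θ t : ℝ) : starRingEnd ℂ (linePoint c θ t) = linePoint c (-θ) t := by
  simp [linePoint, ← Complex.exp_conj]

theorem linePoint_eq_exp_mul (c θ t : ℝ) : linePoint c θ t =
    cexp (θ * I) * ((t + c * Real.cos θ : ℝ) + (-(c * Real.sin θ) : ℝ) * I) := by
  have hexp : cexp (θ * I) * (Real.cos θ - Real.sin θ * I) = 1 := by
    rw [exp_mul_I, ofReal_cos, ofReal_sin]
    linear_combination sin_sq_add_cos_sq (θ : ℂ) - sin (θ : ℂ) ^ 2 * I_sq
  rw [linePoint]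
  push_cast at hexp ⊢
  linear_combination -(c : ℂ) * hexp

theorem linePoint_sub_mul_linePoint_neg_sub (c₁ c₂ θ s t : ℝ) :
    (linePoint c₁ θ s - c₁) * (linePoint c₂ (-θ) t - c₂) = (s * t : ℝ) := by
  have : cexp (θ * I) * cexp ((-θ : ℝ) * I) = 1 := by simp [← Complex.exp_add]
  simp only [linePoint]
  push_cast at this ⊢
  linear_combination (s * t : ℂ) * this

theorem lineInt_eq_integral_linePoint (c θ : ℝ) (f : ℂ → ℂ) :
    lineInt c θ f = ∫ t, f (linePoint c θ t) * cexp (θ * I) :=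
  rfl

theorem lineInt_congr (h : ∀ t, f (linePoint c θ t) = g (linePoint c θ t)) :
    lineInt c θ f = lineInt c θ g :=
  integral_congr_ae (.of_forall fun t => congrArg (· * cexp (θ * I)) (h t))

theorem lineInt_const_mul (c θ : ℝ) (a : ℂ) (f : ℂ → ℂ) :
    lineInt c θ (fun u => a * f u) = a * lineInt c θ f := by
  simp only [lineInt, mul_assoc, integral_const_mul]

theorem lineInt_sub_one (c θ : ℝ) (f : ℂ → ℂ) :
    lineInt (c - 1) θ f = lineInt c θ fun u => f (u - 1) := by
  simp only [lineInt_eq_integral_linePoint, linePoint_sub_one]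

theorem conj_lineInt (c θ : ℝ) (f : ℂ → ℂ) : starRingEnd ℂ (lineInt c θ f) =
    lineInt c (-θ) fun u => starRingEnd ℂ (f (starRingEnd ℂ u)) := by
  have hdir : starRingEnd ℂ (cexp (θ * I)) = cexp ((-θ : ℝ) * I) := by simp [← Complex.exp_conj]
  simp only [lineInt_eq_integral_linePoint, ← integral_conj, conj_linePoint, neg_neg, map_mul, hdir]

theorem lineInt_lineInt_swap {θ₁ θ₂ : ℝ} {F : ℂ → ℂ → ℂ}
    (hF : Integrable fun p : ℝ × ℝ => F (linePoint c₁ θ₁ p.1) (linePoint c₂ θ₂ p.2)) :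
    lineInt c₁ θ₁ (fun u => lineInt c₂ θ₂ fun v => F u v) =
      lineInt c₂ θ₂ fun v => lineInt c₁ θ₁ fun u => F u v := by
  simp only [lineInt, ← integral_mul_const]
  rw [integral_integral_swap ((hF.mul_const (cexp (θ₂ * I))).mul_const (cexp (θ₁ * I)))]
  simp only [mul_right_comm]

theorem lineInt_eq_integral_horizontal (c θ : ℝ) (f : ℂ → ℂ) : lineInt c θ f =
    ∫ x : ℝ, f (cexp (θ * I) * (x + (-(c * Real.sin θ) : ℝ) * I)) * cexp (θ * I) := by
  rw [← integral_add_right_eq_self _ (c * Real.cos θ)]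
  simp_rw [← linePoint_eq_exp_mul]
  exact lineInt_eq_integral_linePoint c θ f

/-- The closed region swept out by the lines in direction `e^{iθ}` that cross the real axis between
`c₁` and `c₂`. -/
def obliqueStrip (c₁ c₂ θ : ℝ) : Set ℂ := image2 (fun s t => linePoint s θ t) (Icc c₁ c₂) univ

theorem exp_mul_mem_obliqueStrip (hθ : 0 < Real.sin θ) {w : ℂ}
    (hw : w.im ∈ Icc (-(c₂ * Real.sin θ)) (-(c₁ * Real.sin θ))) :
    cexp (θ * I) * w ∈ obliqueStrip c₁ c₂ θ := by
  refine ⟨-w.im / Real.sin θ, ?_, w.re + w.im / Real.sin θ * Real.cos θ, mem_univ _, ?_⟩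
  · rw [mem_Icc, le_div_iff₀ hθ, div_le_iff₀ hθ]
    constructor <;> linarith [hw.1, hw.2]
  · refine (linePoint_eq_exp_mul _ _ _).trans (congrArg _ ?_)
    rw [neg_div, neg_mul, neg_mul, neg_neg, div_mul_cancel₀ _ hθ.ne', add_neg_cancel_right,
      re_add_im]

theorem lineInt_sub_lineInt_of_simple_pole {r : ℂ} (hθ : 0 < Real.sin θ) (hc₁ : c₁ < 0)
    (hc₂ : 0 < c₂) (hf : DifferentiableOn ℂ f (obliqueStrip c₁ c₂ θ \ {0}))
    (hr : Tendsto (fun u => u * f u) (𝓝[≠] 0) (𝓝 r))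
    (hf₁ : Integrable fun t => f (linePoint c₁ θ t))
    (hf₂ : Integrable fun t => f (linePoint c₂ θ t))
    (hdecay : Tendsto f (cocompact ℂ ⊓ 𝓟 (obliqueStrip c₁ c₂ θ)) (𝓝 0)) :
    lineInt c₂ θ f - lineInt c₁ θ f = 2 * π * I * r := by
  have he : cexp (θ * I) ≠ 0 := Complex.exp_ne_zero _
  have hmem : MapsTo (cexp (θ * I) * ·) (im ⁻¹' Icc (-(c₂ * Real.sin θ)) (-(c₁ * Real.sin θ)))
      (obliqueStrip c₁ c₂ θ) := fun w hw => exp_mul_mem_obliqueStrip hθ hw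
  have hint {c : ℝ} (hc : Integrable fun t => f (linePoint c θ t)) : Integrable fun x : ℝ =>
      f (cexp (θ * I) * (x + (-(c * Real.sin θ) : ℝ) * I)) * cexp (θ * I) := by
    refine ((hc.comp_add_right (-(c * Real.cos θ))).mul_const (cexp (θ * I))).congr
      (.of_forall fun x => ?_)
    simp [linePoint_eq_exp_mul]
  rw [lineInt_eq_integral_horizontal, lineInt_eq_integral_horizontal]
  refine integral_sub_integral_of_simple_pole (f := fun w => f (cexp (θ * I) * w) * cexp (θ * I))
    (neg_neg_of_pos (by positivity)) (neg_pos.2 (mul_neg_of_neg_of_pos hc₁ hθ)) ?_ ?_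
    (hint hf₂) (hint hf₁) ?_
  · refine (hf.comp (by fun_prop) fun w hw => ?_).mul_const _
    exact ⟨hmem hw.1, mul_ne_zero he hw.2⟩
  · have hrot : Tendsto (cexp (θ * I) * ·) (𝓝[≠] 0) (𝓝[≠] 0) :=
      tendsto_nhdsWithin_of_tendsto_nhds_of_eventually_within _
        (((continuous_const_mul _).tendsto' 0 0 (mul_zero _)).mono_left nhdsWithin_le_nhds)
        (eventually_nhdsWithin_of_forall fun w hw => mul_ne_zero he hw)
    refine (hr.comp hrot).congr fun w => ?_
    simp only [Function.comp_apply]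
    ring
  · have hrot : Tendsto (cexp (θ * I) * ·)
        (cocompact ℂ ⊓ 𝓟 (im ⁻¹' Icc (-(c₂ * Real.sin θ)) (-(c₁ * Real.sin θ))))
        (cocompact ℂ ⊓ 𝓟 (obliqueStrip c₁ c₂ θ)) :=
      (Filter.tendsto_cocompact_mul_left₀ he).inf (tendsto_principal_principal.2 hmem)
    simpa using (hdecay.comp hrot).mul_const (cexp (θ * I))

end Line

section Kernel

theorem isBigO_exp_div_exp_sub_one_atTop (β : ℝ) {κ : ℝ} (hκ : 0 < κ) :
    (fun t => Real.exp (-β * t) / (Real.exp (-κ * t) - 1)) =O[atTop]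
      fun t => Real.exp (-β * t) := by
  have hden : Tendsto (fun t => (Real.exp (-κ * t) - 1)⁻¹) atTop (𝓝 (0 - 1)⁻¹) :=
    ((Real.tendsto_exp_comp_nhds_zero.2
      (tendsto_id.const_mul_atTop_of_neg (neg_neg_of_pos hκ))).sub_const 1).inv₀ (by norm_num)
  simpa [div_eq_mul_inv] using
    (isBigO_refl (fun t => Real.exp (-β * t)) atTop).mul (hden.isBigO_one ℝ)

theorem isBigO_exp_div_exp_sub_one_atBot (β : ℝ) {κ : ℝ} (hκ : 0 < κ) :
    (fun t => Real.exp (-β * t) / (Real.exp (-κ * t) - 1)) =O[atBot]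
      fun t => Real.exp ((κ - β) * t) := by
  refine ((isBigO_exp_div_exp_sub_one_atTop (κ - β) hκ).comp_tendsto
    tendsto_neg_atBot_atTop).neg_left.congr (fun t => ?_)
    fun t => congrArg Real.exp (by ring)
  have hnum : Real.exp (-(κ - β) * -t) = Real.exp (-β * t) * Real.exp (κ * t) := by
    rw [← Real.exp_add]; ring_nf
  have hden : Real.exp (-κ * -t) - 1 = -(Real.exp (-κ * t) - 1) * Real.exp (κ * t) := by
    have : Real.exp (-κ * t) * Real.exp (κ * t) = 1 := by simp [← Real.exp_add]
    rw [neg_mul_neg]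
    linear_combination this
  simp only [Function.comp_apply]
  rw [hnum, hden, mul_div_mul_right _ _ (Real.exp_ne_zero _), div_neg, neg_neg]

theorem tendsto_exp_div_exp_sub_one_cocompact {β κ : ℝ} (hβ : 0 < β) (hβκ : β < κ) :
    Tendsto (fun t => Real.exp (-β * t) / (Real.exp (-κ * t) - 1)) (cocompact ℝ) (𝓝 0) := by
  rw [cocompact_eq_atBot_atTop]
  refine .sup ?_ ?_
  · exact (isBigO_exp_div_exp_sub_one_atBot β (hβ.trans hβκ)).trans_tendsto
      (Real.tendsto_exp_comp_nhds_zero.2 (tendsto_id.const_mul_atBot (sub_pos.2 hβκ)))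
  · exact (isBigO_exp_div_exp_sub_one_atTop β (hβ.trans hβκ)).trans_tendsto
      (Real.tendsto_exp_comp_nhds_zero.2
        (tendsto_id.const_mul_atTop_of_neg (neg_neg_of_pos hβ)))

/-- The integrand `e^{2πiuv} / (e^{2πiu} - 1)` of the Mordell integral without its Gaussian factor,
as a function of `u` with frequency `v`. -/
noncomputable def mordellKernel (v u : ℂ) : ℂ :=
  cexp (2 * π * I * u * v) / (cexp (2 * π * I * u) - 1)

variable {c θ : ℝ} {v : ℂ}

theorem mordellKernel_sub_one (v u : ℂ) :
    mordellKernel v (u - 1) = cexp (-(2 * π * I * v)) * mordellKernel v u := by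
  have hnum : 2 * π * I * (u - 1) * v = -(2 * π * I * v) + 2 * π * I * u * v := by ring
  have hden : 2 * π * I * (u - 1) = 2 * π * I * u - 2 * π * I := by ring
  rw [mordellKernel, mordellKernel, hnum, hden, Complex.exp_add, exp_periodic.sub_eq, mul_div_assoc]

theorem tendsto_mul_mordellKernel (v : ℂ) :
    Tendsto (fun u => u * mordellKernel v u) (𝓝[≠] 0) (𝓝 (2 * π * I)⁻¹) := by
  have hderiv : HasDerivAt (fun u => cexp (2 * π * I * u)) (2 * π * I) 0 := by
    simpa using ((hasDerivAt_id (0 : ℂ)).const_mul (2 * π * I)).cexp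
  have hden := (hasDerivAt_iff_tendsto_slope_zero.1 hderiv).inv₀ two_pi_I_ne_zero
  have hnum : Tendsto (fun u => cexp (2 * π * I * u * v)) (𝓝[≠] 0) (𝓝 1) := by
    refine Tendsto.mono_left (Continuous.tendsto' (by fun_prop) _ _ ?_) nhdsWithin_le_nhds
    simp
  refine (one_mul (2 * π * I : ℂ)⁻¹ ▸ hnum.mul hden).congr fun u => ?_
  simp only [mordellKernel, zero_add, mul_zero, Complex.exp_zero, smul_eq_mul, mul_inv, inv_inv]
  ring

theorem exists_int_eq_of_exp_linePoint_eq_one (hθ : Real.sin θ ≠ 0) {t : ℝ}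
    (h : cexp (2 * π * I * linePoint c θ t) = 1) : t = 0 ∧ ∃ n : ℤ, c = n := by
  obtain ⟨n, hn⟩ := Complex.exp_eq_one_iff.1 h
  rw [mul_comm, mul_left_inj' two_pi_I_ne_zero] at hn
  have ht : t = 0 := by simpa [linePoint_im, hθ] using congrArg im hn
  subst ht
  exact ⟨rfl, n, by simpa [linePoint] using congrArg re hn⟩

theorem exp_linePoint_sub_one_ne_zero (hθ : Real.sin θ ≠ 0) (hc₀ : 0 < c) (hc₁ : c < 1) (t : ℝ) :
    cexp (2 * π * I * linePoint c θ t) - 1 ≠ 0 := fun h => by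
  obtain ⟨-, n, rfl⟩ := exists_int_eq_of_exp_linePoint_eq_one hθ (sub_eq_zero.1 h)
  norm_cast at hc₀ hc₁
  omega

theorem differentiableOn_mordellKernel {c₁ c₂ : ℝ} (v : ℂ) (hθ : Real.sin θ ≠ 0) (hc₁ : -1 < c₁)
    (hc₂ : c₂ < 1) : DifferentiableOn ℂ (mordellKernel v) (obliqueStrip c₁ c₂ θ \ {0}) := by
  unfold mordellKernel
  refine DifferentiableOn.div (by fun_prop) (by fun_prop) ?_
  rintro _ ⟨⟨s, hs, t, -, rfl⟩, hne⟩ h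
  obtain ⟨rfl, n, rfl⟩ := exists_int_eq_of_exp_linePoint_eq_one hθ (sub_eq_zero.1 h)
  have hn₁ : (-1 : ℝ) < n := hc₁.trans_le hs.1
  have hn₂ : (n : ℝ) < 1 := hs.2.trans_lt hc₂
  norm_cast at hn₁ hn₂
  obtain rfl : n = 0 := by omega
  exact hne (by simp [linePoint])

theorem norm_mordellKernel_linePoint_le (hθ : Real.sin θ ≠ 0) (v : ℂ) (c : ℝ) {t : ℝ}
    (ht : t ≠ 0) : ‖mordellKernel v (linePoint c θ t)‖ ≤ Real.exp (-(2 * π * c * v.im)) *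
      ‖Real.exp (-(2 * π * (cexp (θ * I) * v).im) * t) /
        (Real.exp (-(2 * π * Real.sin θ) * t) - 1)‖ := by
  have hnum : ‖cexp (2 * π * I * linePoint c θ t * v)‖ = Real.exp (-(2 * π * c * v.im)) *
      Real.exp (-(2 * π * (cexp (θ * I) * v).im) * t) := by
    rw [Complex.norm_exp, ← Real.exp_add]
    congr 1
    simp only [linePoint, mul_re, re_ofNat, ofReal_re, im_ofNat, ofReal_im, mul_zero, sub_zero,
      I_re, mul_im, zero_mul, add_zero, I_im, mul_one, sub_self, add_re, exp_ofReal_mul_I_re,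
      exp_ofReal_mul_I_im, add_im, zero_add, zero_sub, neg_mul]
    ring
  have hden : ‖cexp (2 * π * I * linePoint c θ t)‖ = Real.exp (-(2 * π * Real.sin θ) * t) := by
    rw [Complex.norm_exp]
    congr 1
    simp only [linePoint, mul_re, re_ofNat, ofReal_re, im_ofNat, ofReal_im, mul_zero, sub_zero,
      I_re, mul_im, zero_mul, add_zero, I_im, mul_one, sub_self, add_re, exp_ofReal_mul_I_re,
      exp_ofReal_mul_I_im, add_im, zero_add, zero_sub, neg_mul, neg_inj]
    ring
  have hpos : 0 < |Real.exp (-(2 * π * Real.sin θ) * t) - 1| := by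
    simp [sub_eq_zero, ht, hθ, Real.pi_ne_zero]
  rw [mordellKernel, norm_div, norm_div, hnum, mul_div_assoc, Real.norm_eq_abs, Real.norm_eq_abs,
    abs_of_pos (Real.exp_pos _)]
  gcongr
  simpa [hden] using abs_norm_sub_norm_le (cexp (2 * π * I * linePoint c θ t)) 1

theorem integrable_mordellKernel_linePoint (hθ : 0 < Real.sin θ) (hc₀ : 0 < c) (hc₁ : c < 1)
    (hv₀ : 0 < (cexp (θ * I) * v).im) (hv₁ : (cexp (θ * I) * v).im < Real.sin θ) :
    Integrable fun t => mordellKernel v (linePoint c θ t) := by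
  have hbound {l : Filter ℝ} (hl : l ≤ cocompact ℝ) :
      (fun t => mordellKernel v (linePoint c θ t)) =O[l] fun t =>
        Real.exp (-(2 * π * (cexp (θ * I) * v).im) * t) /
          (Real.exp (-(2 * π * Real.sin θ) * t) - 1) := by
    refine .of_bound (Real.exp (-(2 * π * c * v.im))) ?_
    filter_upwards [hl isCompact_singleton.compl_mem_cocompact] with t ht
    exact norm_mordellKernel_linePoint_le hθ.ne' v c ht
  have hcont : Continuous fun t => mordellKernel v (linePoint c θ t) := by
    unfold mordellKernel
    fun_prop (disch := exact exp_linePoint_sub_one_ne_zero hθ.ne' hc₀ hc₁)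
  have hκ : 0 < 2 * π * Real.sin θ := by positivity
  refine hcont.locallyIntegrable.integrable_of_isBigO_atBot_atTop
    ((hbound atBot_le_cocompact).trans (isBigO_exp_div_exp_sub_one_atBot _ hκ))
    ⟨Iic 0, Iic_mem_atBot 0, integrableOn_exp_mul_Iic (sub_pos.2 ?_) 0⟩
    ((hbound atTop_le_cocompact).trans (isBigO_exp_div_exp_sub_one_atTop _ hκ))
    ⟨Ioi 0, Ioi_mem_atTop 0, exp_neg_integrableOn_Ioi 0 (by positivity)⟩
  gcongr

theorem tendsto_im_obliqueStrip (c₁ c₂ : ℝ) (hθ : Real.sin θ ≠ 0) :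
    Tendsto im (cocompact ℂ ⊓ 𝓟 (obliqueStrip c₁ c₂ θ)) (cocompact ℝ) := by
  have hbound : ∀ u ∈ obliqueStrip c₁ c₂ θ,
      |Real.sin θ| * (‖u‖ - max |c₁| |c₂|) ≤ ‖u.im‖ := by
    rintro _ ⟨s, hs, t, -, rfl⟩
    have hnorm : ‖linePoint s θ t‖ ≤ |s| + |t| := by
      simpa [linePoint, Complex.norm_exp_ofReal_mul_I] using
        norm_add_le (s : ℂ) (cexp (θ * I) * t)
    rw [linePoint_im, norm_mul, mul_comm, Real.norm_eq_abs, Real.norm_eq_abs]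
    gcongr
    linarith [abs_le_max_abs_abs hs.1 hs.2]
  rw [← Metric.cobounded_eq_cocompact (α := ℝ), ← tendsto_norm_atTop_iff_cobounded]
  refine tendsto_atTop_mono' _ (mem_inf_of_right hbound) (Tendsto.mono_left ?_ inf_le_left)
  exact (tendsto_atTop_add_const_right _ _ tendsto_norm_cocompact_atTop).const_mul_atTop
    (abs_pos.2 hθ)

theorem tendsto_mordellKernel_obliqueStrip (c₁ c₂ : ℝ) (hθ : 0 < Real.sin θ)
    (hv₀ : 0 < (cexp (θ * I) * v).im) (hv₁ : (cexp (θ * I) * v).im < Real.sin θ) :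
    Tendsto (mordellKernel v) (cocompact ℂ ⊓ 𝓟 (obliqueStrip c₁ c₂ θ)) (𝓝 0) := by
  obtain ⟨C, hC⟩ := (isCompact_Icc (a := c₁) (b := c₂)).exists_bound_of_continuousOn
    (f := fun s : ℝ => Real.exp (-(2 * π * s * v.im))) (by fun_prop)
  have him := tendsto_im_obliqueStrip c₁ c₂ hθ.ne'
  have hmodel := (tendsto_exp_div_exp_sub_one_cocompact (by positivity)
    (by gcongr : 2 * π * (cexp (θ * I) * v).im < 2 * π * Real.sin θ)).norm.const_mul C
  rw [norm_zero, mul_zero] at hmodel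
  refine squeeze_zero_norm' ?_ (hmodel.comp
    ((Filter.tendsto_cocompact_mul_left₀ (inv_ne_zero hθ.ne')).comp him))
  filter_upwards [him (isCompact_singleton (x := (0 : ℝ))).compl_mem_cocompact,
    mem_inf_of_right (mem_principal_self _)] with _ hne ⟨s, hs, t, _, hu⟩
  subst hu
  have ht : t ≠ 0 := by rintro rfl; simp [linePoint_im] at hne
  simp only [Function.comp_apply, linePoint_im, mul_comm t, inv_mul_cancel_left₀ hθ.ne']
  refine (norm_mordellKernel_linePoint_le hθ.ne' v s ht).trans ?_
  gcongr
  exact (le_abs_self _).trans (hC s hs)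

theorem lineInt_mordellKernel (hθ : 0 < Real.sin θ) (hc₀ : 0 < c) (hc₁ : c < 1)
    (hv₀ : 0 < (cexp (θ * I) * v).im) (hv₁ : (cexp (θ * I) * v).im < Real.sin θ) :
    lineInt c θ (mordellKernel v) = (1 - cexp (-(2 * π * I * v)))⁻¹ := by
  have hint := integrable_mordellKernel_linePoint hθ hc₀ hc₁ hv₀ hv₁
  have hpole := lineInt_sub_lineInt_of_simple_pole hθ (sub_neg.2 hc₁) hc₀
    (differentiableOn_mordellKernel v hθ.ne' (by linarith) hc₁) (tendsto_mul_mordellKernel v)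
    (by simpa only [linePoint_sub_one, mordellKernel_sub_one] using hint.const_mul _) hint
    (tendsto_mordellKernel_obliqueStrip _ _ hθ hv₀ hv₁)
  have hshift : lineInt (c - 1) θ (mordellKernel v) =
      cexp (-(2 * π * I * v)) * lineInt c θ (mordellKernel v) := by
    rw [← lineInt_const_mul, lineInt_sub_one]
    simp only [mordellKernel_sub_one]
  rw [hshift, mul_inv_cancel₀ two_pi_I_ne_zero] at hpole
  exact eq_inv_of_mul_eq_one_right (by linear_combination hpole)

theorem lineInt_mordellKernel_linePoint_neg {c₁ c₂ : ℝ} (hθ : 0 < Real.sin θ) (hc₁ : 0 < c₁)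
    (hc₁' : c₁ < 1) (hc₂ : 0 < c₂) (hc₂' : c₂ < 1) (t : ℝ) :
    lineInt c₁ θ (mordellKernel (linePoint c₂ (-θ) t)) =
      (1 - cexp (-(2 * π * I * linePoint c₂ (-θ) t)))⁻¹ := by
  have him : (cexp (θ * I) * linePoint c₂ (-θ) t).im = c₂ * Real.sin θ := by
    rw [exp_mul_linePoint_neg, linePoint_im]
  refine lineInt_mordellKernel hθ hc₁ hc₁' ?_ ?_ <;> rw [him]
  · positivity
  · exact mul_lt_of_lt_one_left hθ hc₂'

end Kernel

section Gaussian

variable {c c₁ c₂ : ℝ} {x τ : ℂ}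

/-- The Gaussian `e^{-πi(v-x)²/τ}`, which decays along lines of slope `-1` and whose Fourier
transform along them is a multiple of `e^{πiτu² + 2πixu}`. -/
noncomputable def obliqueGaussian (x τ v : ℂ) : ℂ := cexp (-(π * I * (v - x) ^ 2 / τ))

theorem exp_neg_pi_div_four_mul_I_sq : cexp ((-(π / 4) : ℝ) * I) ^ 2 = -I := by
  rw [← Complex.exp_nat_mul, ← exp_neg_pi_div_two_mul_I]
  congr 1
  push_cast
  ring

theorem obliqueGaussian_linePoint_mul_exp (x τ u : ℂ) (c t : ℝ) :
    obliqueGaussian x τ (linePoint c (-(π / 4)) t) *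
        cexp (2 * π * I * u * linePoint c (-(π / 4)) t) =
      cexp (-(π / τ) * t ^ 2 +
        2 * π * I * cexp ((-(π / 4) : ℝ) * I) * (u - (c - x) / τ) * t +
        (2 * π * I * u * c - π * I * (c - x) ^ 2 / τ)) := by
  rw [obliqueGaussian, linePoint, ← Complex.exp_add]
  congr 1
  linear_combination -(π * I * t ^ 2 / τ) * exp_neg_pi_div_four_mul_I_sq + π * t ^ 2 / τ * I_sq

theorem re_neg_pi_div_neg (hτ : 0 < τ.re) : (-(π / τ)).re < 0 := by
  have hτ₀ : 0 < normSq τ := normSq_pos.2 fun h => by simp [h] at hτ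
  rw [div_eq_mul_inv, neg_re, re_ofReal_mul, inv_re, neg_neg_iff_pos]
  positivity

theorem integrable_obliqueGaussian_mul_exp (x u : ℂ) (c : ℝ) (hτ : 0 < τ.re) :
    Integrable fun t => obliqueGaussian x τ (linePoint c (-(π / 4)) t) *
      cexp (2 * π * I * u * linePoint c (-(π / 4)) t) := by
  simp_rw [obliqueGaussian_linePoint_mul_exp]
  exact integrable_cexp_quadratic' (re_neg_pi_div_neg hτ) _ _

theorem lineInt_obliqueGaussian_mul_exp (x u : ℂ) (c : ℝ) (hτ : 0 < τ.re) :
    lineInt c (-(π / 4)) (fun v => obliqueGaussian x τ v * cexp (2 * π * I * u * v)) =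
      cexp (-(π / 4) * I) * τ ^ (1 / 2 : ℂ) * cexp (π * I * τ * u ^ 2 + 2 * π * I * x * u) := by
  have hτ₀ : τ ≠ 0 := fun h => by simp [h] at hτ
  have hπ : (π : ℂ) ≠ 0 := ofReal_ne_zero.2 Real.pi_ne_zero
  have hb : (π : ℂ) / -(-(π / τ)) = τ := by rw [neg_neg, div_div_cancel₀ hπ]
  have hexp : 2 * π * I * u * c - π * I * (c - x) ^ 2 / τ -
      (2 * π * I * cexp ((-(π / 4) : ℝ) * I) * (u - (c - x) / τ)) ^ 2 / (4 * -(π / τ)) =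
        π * I * τ * u ^ 2 + 2 * π * I * x * u := by
    rw [mul_pow, mul_pow, exp_neg_pi_div_four_mul_I_sq]
    field_simp
    linear_combination -4 * (c - x - u * τ) ^ 2 * I_sq
  simp_rw [lineInt_eq_integral_linePoint, integral_mul_const, obliqueGaussian_linePoint_mul_exp]
  rw [integral_cexp_quadratic (re_neg_pi_div_neg hτ), hb, hexp]
  push_cast
  ring

theorem mordellPhi_eq_lineInt_lineInt (x : ℂ) (c₁ c₂ : ℝ) (hτ : 0 < τ.re) :
    cexp (-(π / 4) * I) * τ ^ (1 / 2 : ℂ) * mordellPhi x τ c₁ =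
      lineInt c₁ (π / 4) fun u => lineInt c₂ (-(π / 4)) fun v =>
        obliqueGaussian x τ v * mordellKernel v u := by
  rw [mordellPhi, ← lineInt_const_mul]
  congr with u
  rw [← mul_div_assoc, ← lineInt_obliqueGaussian_mul_exp x u c₂ hτ, div_eq_inv_mul,
    ← lineInt_const_mul]
  congr with v
  rw [mordellKernel]
  ring

theorem mordellKernel_linePoint_neg (c₁ c₂ θ s t : ℝ) :
    mordellKernel (linePoint c₂ (-θ) t) (linePoint c₁ θ s) =
      mordellKernel c₂ (linePoint c₁ θ s) * cexp (2 * π * I * c₁ * linePoint c₂ (-θ) t) *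
        cexp ((2 * π * (s * t - c₁ * c₂) : ℝ) * I) := by
  rw [mordellKernel, mordellKernel, div_mul_eq_mul_div, div_mul_eq_mul_div, ← Complex.exp_add,
    ← Complex.exp_add]
  congr 2
  have hprod := linePoint_sub_mul_linePoint_neg_sub c₁ c₂ θ s t
  push_cast at hprod ⊢
  linear_combination 2 * π * I * hprod

theorem integrable_obliqueGaussian_mul_mordellKernel (x : ℂ) (hτ : 0 < τ.re) (hc₁ : 0 < c₁)
    (hc₁' : c₁ < 1) (hc₂ : 0 < c₂) (hc₂' : c₂ < 1) :
    Integrable fun p : ℝ × ℝ => obliqueGaussian x τ (linePoint c₂ (-(π / 4)) p.2) *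
      mordellKernel (linePoint c₂ (-(π / 4)) p.2) (linePoint c₁ (π / 4) p.1) := by
  have hsin : 0 < Real.sin (π / 4) := by rw [Real.sin_pi_div_four]; positivity
  have him : (cexp ((π / 4 : ℝ) * I) * c₂).im = c₂ * Real.sin (π / 4) := by
    rw [im_mul_ofReal, exp_ofReal_mul_I_im, mul_comm]
  have hkernel : Integrable fun s => mordellKernel c₂ (linePoint c₁ (π / 4) s) :=
    integrable_mordellKernel_linePoint hsin hc₁ hc₁' (by rw [him]; positivity)
      (by rw [him]; exact mul_lt_of_lt_one_left hsin hc₂')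
  have hphase : Continuous fun p : ℝ × ℝ =>
      cexp ((2 * π * (p.1 * p.2 - c₁ * c₂) : ℝ) * I) := by fun_prop
  -- Since `(u - c₁)(v - c₂)` is real for `u`, `v` on the two lines, the integrand is a product of a
  -- function of `u` and a function of `v`, up to a factor of modulus one.
  refine ((hkernel.mul_prod (integrable_obliqueGaussian_mul_exp x c₁ c₂ hτ)).mul_bdd
    (c := 1) hphase.aestronglyMeasurable (.of_forall fun p => ?_)).congr (.of_forall fun p => ?_)
  · exact (Complex.norm_exp_ofReal_mul_I _).le
  · simp only [mordellKernel_linePoint_neg]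
    ring

theorem lineInt_obliqueGaussian_mul_inv (x τ : ℂ) (c : ℝ) :
    lineInt c (-(π / 4)) (fun v => obliqueGaussian x τ v * (1 - cexp (-(2 * π * I * v)))⁻¹) =
      -cexp (-(π * I * x ^ 2 / τ)) * starRingEnd ℂ
        (mordellPhi (-(starRingEnd ℂ x) / starRingEnd ℂ τ) (1 / starRingEnd ℂ τ) c) := by
  rw [mordellPhi, conj_lineInt, ← lineInt_const_mul]
  refine lineInt_congr fun t => ?_
  generalize linePoint c (-(π / 4)) t = v
  have hden : 1 - cexp (-(2 * π * I * v)) = -(cexp (-(2 * π * I * v)) - 1) := by ring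
  have hexp : -(π * I * (v - x) ^ 2 / τ) =
      -(π * I * x ^ 2 / τ) + (-(π * I * v ^ 2 / τ) + 2 * π * I * x * v / τ) := by ring
  rw [hden, inv_neg, obliqueGaussian, hexp, Complex.exp_add]
  simp only [map_div₀, map_sub, map_add, map_mul, map_neg, map_pow, map_one, map_ofNat,
    ← Complex.exp_conj, conj_ofReal, conj_I, Complex.conj_conj]
  ring_nf

end Gaussian

theorem mordell_functional_equation_real_general (τ : ℂ) (hτ : 0 < τ.re) (x : ℂ) (c₁ c₂ : ℝ)
    (hc₁ : 0 < c₁) (hc₁' : c₁ < 1) (hc₂ : 0 < c₂) (hc₂' : c₂ < 1) :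
    mordellPhi x τ c₁ = -(cexp (π * I * (1 / 4 - x ^ 2 / τ)) / τ ^ (1 / 2 : ℂ)) *
      starRingEnd ℂ
        (mordellPhi (-(starRingEnd ℂ x) / starRingEnd ℂ τ) (1 / starRingEnd ℂ τ) c₂) := by
  have hfubini : cexp (-(π / 4) * I) * τ ^ (1 / 2 : ℂ) * mordellPhi x τ c₁ =
      lineInt c₂ (-(π / 4))
        fun v => obliqueGaussian x τ v * (1 - cexp (-(2 * π * I * v)))⁻¹ := by
    rw [mordellPhi_eq_lineInt_lineInt x c₁ c₂ hτ, lineInt_lineInt_swap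
      (integrable_obliqueGaussian_mul_mordellKernel x hτ hc₁ hc₁' hc₂ hc₂')]
    refine lineInt_congr fun t => ?_
    rw [lineInt_const_mul, lineInt_mordellKernel_linePoint_neg
      (by rw [Real.sin_pi_div_four]; positivity) hc₁ hc₁' hc₂ hc₂']
  have hphase : cexp (π * I * (1 / 4 - x ^ 2 / τ)) * cexp (-(π / 4) * I) =
      cexp (-(π * I * x ^ 2 / τ)) := by
    rw [← Complex.exp_add]
    ring_nf
  have hsqrt : τ ^ (1 / 2 : ℂ) ≠ 0 := cpow_ne_zero_iff_of_exponent_ne_zero (by norm_num) |>.2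
    fun h => by simp [h] at hτ
  rw [lineInt_obliqueGaussian_mul_inv, ← hphase] at hfubini
  rw [← neg_div, div_mul_eq_mul_div, eq_div_iff hsqrt]
  exact mul_left_cancel₀ (Complex.exp_ne_zero (-(π / 4) * I)) (by linear_combination hfubini)

/-- Functional equation of the Mordell integral for positive real `τ`. -/
theorem mordell_functional_equation_real (τ : ℝ) (hτ : 0 < τ) (x : ℂ) (c₁ c₂ : ℝ)
    (hc₁ : 0 < c₁) (hc₁' : c₁ < 1) (hc₂ : 0 < c₂) (hc₂' : c₂ < 1) :
    mordellPhi x (τ : ℂ) c₁ =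
      -(Complex.exp ((π : ℂ) * Complex.I * (1 / 4 - x ^ 2 / (τ : ℂ))) / (Real.sqrt τ : ℂ)) *
        starRingEnd ℂ (mordellPhi (-(starRingEnd ℂ x) / (τ : ℂ)) (1 / (τ : ℂ)) c₂) := by
  have hsqrt : (Real.sqrt τ : ℂ) = (τ : ℂ) ^ (1 / 2 : ℂ) := by
    rw [Real.sqrt_eq_rpow, ofReal_cpow hτ.le]
    norm_num
  rw [hsqrt]
  simpa only [conj_ofReal] using
    mordell_functional_equation_real_general τ hτ x c₁ c₂ hc₁ hc₁' hc₂ hc₂'
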